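/- Every maximal Sidon set in F_2^6 is the image under some affine permutation of either M_{6a} = {0, e_1, e_2, e_3, e_4, e_5, e_6, e_1+e_2+e_3+e_4, e_1+e_2+e_5+e_6} (of size 9) or M_{6b} = {0, e_1, e_2, e_3, e_4, e_5, e_6, e_1+e_2+e_3+e_4+e_5+e_6} (of size 8), where e_1,...,e_6 is the standard basis of F_2^6. -/

import Mathlib

/-- A subset `M` of `𝔽₂ᵗ` is Sidon if `m₁+m₂ ≠ m₃+m₄` for pairwise distinct elements. -/
def IsSidon {t : ℕ} (M : Finset (Fin t → ZMod 2)) : Prop :=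
  ∀ m₁ ∈ M, ∀ m₂ ∈ M, ∀ m₃ ∈ M, ∀ m₄ ∈ M,
    (m₁ ≠ m₂ ∧ m₁ ≠ m₃ ∧ m₁ ≠ m₄ ∧ m₂ ≠ m₃ ∧ m₂ ≠ m₄ ∧ m₃ ≠ m₄) →
    m₁ + m₂ ≠ m₃ + m₄

/-- `M` is sum-free if `m₁+m₂ ≠ m₃` for all `m₁,m₂,m₃ ∈ M`. -/
def IsSumFree {t : ℕ} (M : Finset (Fin t → ZMod 2)) : Prop :=
  ∀ m₁ ∈ M, ∀ m₂ ∈ M, ∀ m₃ ∈ M, m₁ + m₂ ≠ m₃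

/-- A maximal Sidon set. -/
def IsMaximalSidon {t : ℕ} (M : Finset (Fin t → ZMod 2)) : Prop :=
  IsSidon M ∧ ∀ S : Finset (Fin t → ZMod 2), IsSidon S → M ⊆ S → S = M

/-- Maximum size of a Sidon set in `𝔽₂ᵗ`. -/
noncomputable def sMax (t : ℕ) : ℕ :=
  sSup {n : ℕ | ∃ M : Finset (Fin t → ZMod 2), IsSidon M ∧ M.card = n}

/-- 2-sums of `M`. -/
def twoSums {t : ℕ} (M : Finset (Fin t → ZMod 2)) : Finset (Fin t → ZMod 2) :=
  (M ×ˢ M).image fun p => p.1 + p.2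

/-- 2-star-sums of `M` (sums of two distinct elements). -/
def twoStarSums {t : ℕ} (M : Finset (Fin t → ZMod 2)) : Finset (Fin t → ZMod 2) :=
  ((M ×ˢ M).filter fun p => p.1 ≠ p.2).image fun p => p.1 + p.2

/-- 3-sums of `M`. -/
def threeSums {t : ℕ} (M : Finset (Fin t → ZMod 2)) : Finset (Fin t → ZMod 2) :=
  ((M ×ˢ M) ×ˢ M).image fun p => p.1.1 + p.1.2 + p.2

/-- 3-star-sums of `M` (sums of three pairwise distinct elements). -/
def threeStarSums {t : ℕ} (M : Finset (Fin t → ZMod 2)) : Finset (Fin t → ZMod 2) :=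
  (((M ×ˢ M) ×ˢ M).filter fun p => p.1.1 ≠ p.1.2 ∧ p.1.1 ≠ p.2 ∧ p.1.2 ≠ p.2).image
    fun p => p.1.1 + p.1.2 + p.2

/-- 4-sums of `M`. -/
def fourSums {t : ℕ} (M : Finset (Fin t → ZMod 2)) : Finset (Fin t → ZMod 2) :=
  (((M ×ˢ M) ×ˢ M) ×ˢ M).image fun p => p.1.1.1 + p.1.1.2 + p.1.2 + p.2

/-- The standard basis vectors of `𝔽₂ᵗ`. -/
def stdBasis {t : ℕ} (i : Fin t) : Fin t → ZMod 2 := Pi.single i 1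

/-- The maximal Sidon set `M₆ₐ` of size 9 in `𝔽₂⁶`. -/
def M6a : Finset (Fin 6 → ZMod 2) :=
  {0, stdBasis 0, stdBasis 1, stdBasis 2, stdBasis 3, stdBasis 4, stdBasis 5,
    stdBasis 0 + stdBasis 1 + stdBasis 2 + stdBasis 3,
    stdBasis 0 + stdBasis 1 + stdBasis 4 + stdBasis 5}

/-- The maximal Sidon set `M₆ᵦ` of size 8 in `𝔽₂⁶`. -/
def M6b : Finset (Fin 6 → ZMod 2) :=
  {0, stdBasis 0, stdBasis 1, stdBasis 2, stdBasis 3, stdBasis 4, stdBasis 5,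
    stdBasis 0 + stdBasis 1 + stdBasis 2 + stdBasis 3 + stdBasis 4 + stdBasis 5}

/-!
A maximal Sidon set affinely spans the space, since a point outside its affine span could be added
to it; hence it contains an affine frame of seven points. In barycentric coordinates over `𝔽₂` every
point is the sum of an odd number of frame points. The Sidon property excludes sums of three frame
points, so a point off the frame omits either none or exactly two of them. Comparing two points off
the frame shows that both omit two frame points and that these pairs are disjoint. Three such points
would add up to the seventh frame point, so there are at most two. After relabelling the frame, the
set is contained in an affine image of `M6a` or `M6b`, which is itself Sidon, and maximality forces
equality.
-/

section

open Finset

theorem add_eq_iff_eq_add_of_zmod_two {V : Type*} [AddCommGroup V] [Module (ZMod 2) V]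
    {x y z : V} : x + y = z ↔ x = z + y := by
  rw [← ZModModule.sub_eq_add x y, sub_eq_iff_eq_add]

theorem sum_add_sum_eq_sum_symmDiff {ι V : Type*} [DecidableEq ι] [AddCommGroup V]
    [Module (ZMod 2) V] (f : ι → V) (S T : Finset ι) :
    ∑ i ∈ S, f i + ∑ i ∈ T, f i = ∑ i ∈ symmDiff S T, f i := by
  have hsub : S ∩ T ⊆ S ∪ T := inter_subset_left.trans subset_union_left
  rw [← sum_union_inter, add_eq_iff_eq_add_of_zmod_two, ← sum_sdiff hsub,
    symmDiff_eq_sup_sdiff_inf, sup_eq_union, inf_eq_inter]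

theorem card_symmDiff_add_two_mul_card_inter {ι : Type*} [DecidableEq ι] (S T : Finset ι) :
    #(symmDiff S T) + 2 * #(S ∩ T) = #S + #T := by
  have hsub : S ∩ T ⊆ S ∪ T := inter_subset_left.trans subset_union_left
  have hsdiff : #(symmDiff S T) + #(S ∩ T) = #(S ∪ T) := by
    rw [symmDiff_eq_sup_sdiff_inf]
    exact card_sdiff_add_card_eq_card hsub
  have hunion := card_union_add_card_inter S T
  omega

theorem isSidon_iff_add_add_mem {t : ℕ} {M : Finset (Fin t → ZMod 2)} : IsSidon M ↔
    ∀ a ∈ M, ∀ b ∈ M, ∀ c ∈ M, a + b + c ∈ M → a = b ∨ a = c ∨ b = c := by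
  constructor
  · intro hM a ha b hb c hc habc
    by_contra! hne
    obtain ⟨hab, hac, hbc⟩ := hne
    refine hM a ha b hb c hc _ habc ⟨hab, hac, ?_, hbc, ?_, ?_⟩ ?_
    · simpa [add_assoc, add_eq_zero_iff_eq_neg, ZModModule.neg_eq_self] using hbc
    · simpa [add_right_comm a b c, add_eq_zero_iff_eq_neg, ZModModule.neg_eq_self] using hac
    · simpa [add_eq_zero_iff_eq_neg, ZModModule.neg_eq_self] using hab
    · rw [add_comm c, add_assoc (a + b), ZModModule.add_self, add_zero]
  · rintro hM a ha b hb c hc d hd ⟨hab, hac, -, hbc, -, -⟩ h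
    have habc : a + b + c = d := by rw [add_eq_iff_eq_add_of_zmod_two, h, add_comm]
    rcases hM a ha b hb c hc (habc ▸ hd) with h | h | h <;> contradiction

namespace IsSidon

variable {t : ℕ} {M : Finset (Fin t → ZMod 2)}

theorem insert (hM : IsSidon M) {x : Fin t → ZMod 2}
    (hx : ∀ a ∈ M, ∀ b ∈ M, ∀ c ∈ M, a + b + c ≠ x) : IsSidon (insert x M) := by
  have hadd_ne : ∀ a ∈ M, ∀ b ∈ M, ∀ c ∈ M, x + a ≠ b + c := fun a ha b hb c hc h =>
    hx b hb c hc a ha (add_eq_iff_eq_add_of_zmod_two.1 h).symm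
  -- A violation involves `x` exactly once, so it can be rearranged to read `x + a = b + c`.
  simp only [IsSidon, mem_insert]
  grind [IsSidon]

theorem image {s : ℕ} (hM : IsSidon M) (f : (Fin t → ZMod 2) →ᵃ[ZMod 2] (Fin s → ZMod 2))
    (hf : Function.Injective f) : IsSidon (M.image f) := by
  simp only [IsSidon, forall_mem_image, hf.ne_iff]
  intro a ha b hb c hc d hd hne h
  refine hM a ha b hb c hc d hd hne (f.linear_injective_iff.2 hf ?_)
  rw [f.decomp] at h
  simpa [add_add_add_comm _ (f 0)] using h

end IsSidon

theorem IsMaximalSidon.affineSpan_eq_top {t : ℕ} {M : Finset (Fin t → ZMod 2)}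
    (hM : IsMaximalSidon M) : affineSpan (ZMod 2) (M : Set (Fin t → ZMod 2)) = ⊤ := by
  by_contra htop
  obtain ⟨x, hx⟩ : ∃ x, x ∉ affineSpan (ZMod 2) (M : Set (Fin t → ZMod 2)) := by
    by_contra! h
    exact htop (eq_top_iff.2 fun x _ => h x)
  have hsub (a) (ha : a ∈ M) : a ∈ affineSpan (ZMod 2) (M : Set (Fin t → ZMod 2)) :=
    subset_affineSpan _ _ ha
  have hsidon : IsSidon (insert x M) := hM.1.insert fun a ha b hb c hc h => hx <| by
    simpa [ZModModule.sub_eq_add, h] using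
      AffineSubspace.smul_vsub_vadd_mem _ 1 (hsub a ha) (hsub b hb) (hsub c hc)
  exact hx (hsub x (hM.2 _ hsidon (subset_insert x M) ▸ mem_insert_self x M))

theorem exists_affineBasis_forall_mem {k V P : Type*} [DivisionRing k] [AddCommGroup V]
    [Module k V] [FiniteDimensional k V] [AddTorsor V P] {s : Set P} (hs : affineSpan k s = ⊤)
    {n : ℕ} (hn : Module.finrank k V = n) :
    ∃ b : AffineBasis (Fin (n + 1)) k P, ∀ i, b i ∈ s := by
  obtain ⟨u, hus, b, hb⟩ := AffineBasis.exists_affine_subbasis hs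
  have := b.finite
  have := Fintype.ofFinite u
  have hcard : Fintype.card u = n + 1 := by rw [b.card_eq_finrank_add_one, hn]
  refine ⟨b.reindex (Fintype.equivFinOfCardEq hcard), fun i => ?_⟩
  rw [AffineBasis.reindex_apply, hb]
  exact hus (Subtype.coe_prop _)

/-- The affine frame `0, e₁, …, eₜ` of `𝔽₂ᵗ`. -/
def stdFrame {t : ℕ} : Fin (t + 1) → Fin t → ZMod 2 := Fin.cons 0 stdBasis

theorem exists_affineEquiv_comp_stdFrame {t : ℕ} {V : Type*} [AddCommGroup V]
    [Module (ZMod 2) V] (b : AffineBasis (Fin (t + 1)) (ZMod 2) V) :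
    ∃ f : (Fin t → ZMod 2) ≃ᵃ[ZMod 2] V, f ∘ stdFrame = b := by
  let B := (b.basisOf 0).reindex (finSuccAboveEquiv 0).symm
  refine ⟨B.equivFun.symm.toAffineEquiv.trans (AffineEquiv.constVAdd _ _ (b 0)), ?_⟩
  ext i
  cases i using Fin.cases with
  | zero => simp [stdFrame]
  | succ i => simp [stdFrame, stdBasis, B, finSuccAboveEquiv_apply]

theorem map_sum_of_odd_card {ι V W : Type*} [AddCommGroup V] [Module (ZMod 2) V]
    [AddCommGroup W] [Module (ZMod 2) W] (f : V →ᵃ[ZMod 2] W) (p : ι → V) {S : Finset ι}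
    (hS : Odd #S) : f (∑ i ∈ S, p i) = ∑ i ∈ S, f (p i) := by
  rw [f.decomp]
  simp [sum_add_distrib, ← Nat.cast_smul_eq_nsmul (ZMod 2), ZMod.natCast_eq_one_iff_odd.2 hS]

/-- The points of the frame `p` together with, for each `T ∈ 𝒯`, the sum of the points of `p` whose
index is not in `T`. Indexing by the omitted points keeps the sets `T` small in dimension six. -/
def frameExtension {ι V : Type*} [Fintype ι] [DecidableEq ι] [AddCommGroup V] [DecidableEq V]
    (p : ι → V) (𝒯 : Finset (Finset ι)) : Finset V :=
  univ.image p ∪ 𝒯.image fun T => ∑ i ∈ Tᶜ, p i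

section frameExtension

variable {ι κ V W : Type*} [Fintype ι] [DecidableEq ι] [Fintype κ] [DecidableEq κ]
  [AddCommGroup V] [DecidableEq V] [AddCommGroup W] [DecidableEq W]

theorem frameExtension_mono (p : ι → V) : Monotone (frameExtension p) :=
  fun _ _ h => union_subset_union_right (image_subset_image h)

theorem frameExtension_comp_equiv (p : ι → V) (e : κ ≃ ι) (𝒯 : Finset (Finset κ)) :
    frameExtension (p ∘ e) 𝒯 = frameExtension p (𝒯.image (image e)) := by
  have hsum (T : Finset κ) : ∑ i ∈ Tᶜ, p (e i) = ∑ i ∈ (T.image e)ᶜ, p i :=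
    sum_equiv e (by simp) (by simp)
  simp only [frameExtension, ← image_image, image_univ_equiv, Function.comp_apply, hsum]
  rw [image_image]
  rfl

theorem image_frameExtension [Module (ZMod 2) V] [Module (ZMod 2) W] (f : V →ᵃ[ZMod 2] W)
    (p : ι → V) {𝒯 : Finset (Finset ι)} (h𝒯 : ∀ T ∈ 𝒯, Odd #Tᶜ) :
    (frameExtension p 𝒯).image f = frameExtension (f ∘ p) 𝒯 := by
  rw [frameExtension, image_union, image_image, image_image]
  exact congrArg _ (image_congr fun T hT => map_sum_of_odd_card f p (h𝒯 T hT))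

theorem exists_affineEquiv_image_frameExtension {t : ℕ} [Module (ZMod 2) V]
    (b : AffineBasis (Fin (t + 1)) (ZMod 2) V) {𝒯 : Finset (Finset (Fin (t + 1)))}
    (h𝒯 : ∀ T ∈ 𝒯, Odd #Tᶜ) :
    ∃ f : (Fin t → ZMod 2) ≃ᵃ[ZMod 2] V,
      (frameExtension stdFrame 𝒯).image f = frameExtension b 𝒯 := by
  obtain ⟨f, hf⟩ := exists_affineEquiv_comp_stdFrame b
  exact ⟨f, hf ▸ image_frameExtension f.toAffineMap stdFrame h𝒯⟩

end frameExtension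

theorem M6a_eq_frameExtension : M6a = frameExtension stdFrame {{3, 4}, {5, 6}} := by
  decide +kernel

theorem M6b_eq_frameExtension : M6b = frameExtension stdFrame {∅} := by
  decide +kernel

theorem isSidon_M6a : IsSidon M6a := by
  rw [isSidon_iff_add_add_mem]
  decide +kernel

theorem isSidon_M6b : IsSidon M6b := by
  rw [isSidon_iff_add_add_mem]
  decide +kernel

/-- The indices of the barycentric coordinates of `x` that vanish: over `𝔽₂`, the point `x` is the
sum of the points of `b` whose index lies outside this set. -/
noncomputable def zeroCoords {ι V : Type*} [Fintype ι] [AddCommGroup V] [Module (ZMod 2) V]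
    (b : AffineBasis ι (ZMod 2) V) (x : V) : Finset ι :=
  {i | b.coord i x = 0}

section zeroCoords

variable {ι V : Type*} [Fintype ι] [AddCommGroup V] [Module (ZMod 2) V]
  (b : AffineBasis ι (ZMod 2) V)

theorem coord_eq_ite_mem_compl_zeroCoords [DecidableEq ι] (x : V) (i : ι) :
    b.coord i x = if i ∈ (zeroCoords b x)ᶜ then 1 else 0 := by
  by_cases h : b.coord i x = 0
  · simp [zeroCoords, h]
  · rw [if_pos (by simpa [zeroCoords] using h)]
    exact Fin.eq_one_of_ne_zero _ h

theorem sum_compl_zeroCoords [DecidableEq ι] (x : V) : ∑ i ∈ (zeroCoords b x)ᶜ, b i = x := by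
  simpa only [coord_eq_ite_mem_compl_zeroCoords, ite_smul, one_smul, zero_smul, sum_ite_mem,
    univ_inter] using b.linear_combination_coord_eq_self x

theorem zeroCoords_injective : Function.Injective (zeroCoords b) := fun x y h => by
  classical
  rw [← sum_compl_zeroCoords b x, h, sum_compl_zeroCoords]

variable [DecidableEq ι]

theorem odd_card_compl_zeroCoords (x : V) : Odd #(zeroCoords b x)ᶜ := by
  rw [← ZMod.natCast_eq_one_iff_odd, ← b.sum_coord_apply_eq_one x]
  simp only [coord_eq_ite_mem_compl_zeroCoords, sum_boole, filter_mem_eq_inter, univ_inter]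

theorem card_compl_zeroCoords_ne_one {x : V} (hx : x ∉ Set.range b) : #(zeroCoords b x)ᶜ ≠ 1 := by
  intro h
  obtain ⟨i, hi⟩ := card_eq_one.1 h
  exact hx ⟨i, by rw [← sum_compl_zeroCoords b x, hi, sum_singleton]⟩

theorem sum_symmDiff_zeroCoords (x y : V) :
    ∑ i ∈ symmDiff (zeroCoords b x) (zeroCoords b y), b i = x + y := by
  rw [← compl_symmDiff_compl, ← sum_add_sum_eq_sum_symmDiff, sum_compl_zeroCoords,
    sum_compl_zeroCoords]

theorem sum_compl_symmDiff_zeroCoords (x y z : V) :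
    ∑ i ∈ (symmDiff (symmDiff (zeroCoords b x) (zeroCoords b y)) (zeroCoords b z))ᶜ, b i
      = x + y + z := by
  have hcompl (S T : Finset ι) : (symmDiff S T)ᶜ = symmDiff S Tᶜ := by
    ext i
    simp only [mem_compl, mem_symmDiff]
    tauto
  rw [hcompl, ← sum_add_sum_eq_sum_symmDiff, sum_symmDiff_zeroCoords, sum_compl_zeroCoords]

theorem subset_frameExtension_image_zeroCoords [DecidableEq V] (M : Finset V) :
    M ⊆ frameExtension b ((M \ univ.image b).image (zeroCoords b)) := by
  rw [frameExtension, image_image]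
  exact sdiff_le_iff.1 fun x hx => mem_image.2 ⟨x, hx, sum_compl_zeroCoords b x⟩

end zeroCoords

namespace IsSidon

variable {t : ℕ} {M : Finset (Fin t → ZMod 2)} {ι : Type*} [Fintype ι] [DecidableEq ι]
  {b : AffineBasis ι (ZMod 2) (Fin t → ZMod 2)} {x y z : Fin t → ZMod 2}

theorem card_compl_zeroCoords_ne_three (hM : IsSidon M) (hb : ∀ i, b i ∈ M) (hx : x ∈ M) :
    #(zeroCoords b x)ᶜ ≠ 3 := by
  intro h
  obtain ⟨i, j, k, hij, hik, hjk, hS⟩ := card_eq_three.1 h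
  have hsum : b i + b j + b k = x := by
    rw [← sum_compl_zeroCoords b x, hS, sum_insert (by simp [hij, hik]), sum_pair hjk, add_assoc]
  have := isSidon_iff_add_add_mem.1 hM _ (hb i) _ (hb j) _ (hb k) (hsum ▸ hx)
  simp [b.ind.injective.eq_iff, hij, hik, hjk] at this

theorem card_symmDiff_zeroCoords_ne_two (hM : IsSidon M) (hb : ∀ i, b i ∈ M) (hx : x ∈ M)
    (hy : y ∈ M) (hxb : x ∉ Set.range b) (hyb : y ∉ Set.range b) :
    #(symmDiff (zeroCoords b x) (zeroCoords b y)) ≠ 2 := by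
  intro h
  obtain ⟨i, j, hij, hS⟩ := card_eq_two.1 h
  have hsum : x + y + b j = b i := by
    rw [← sum_symmDiff_zeroCoords b x y, hS, sum_pair hij, add_assoc, ZModModule.add_self,
      add_zero]
  rcases isSidon_iff_add_add_mem.1 hM x hx y hy _ (hb j) (hsum ▸ hb i) with rfl | rfl | rfl
  · simp at h
  · exact hxb ⟨j, rfl⟩
  · exact hyb ⟨j, rfl⟩

theorem card_compl_symmDiff_zeroCoords_ne_one (hM : IsSidon M) (hb : ∀ i, b i ∈ M) (hx : x ∈ M)
    (hy : y ∈ M) (hz : z ∈ M) (hxy : x ≠ y) (hxz : x ≠ z) (hyz : y ≠ z) :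
    #(symmDiff (symmDiff (zeroCoords b x) (zeroCoords b y)) (zeroCoords b z))ᶜ ≠ 1 := by
  intro h
  obtain ⟨i, hS⟩ := card_eq_one.1 h
  have hsum : x + y + z = b i := by
    rw [← sum_compl_symmDiff_zeroCoords b x y z, hS, sum_singleton]
  have := isSidon_iff_add_add_mem.1 hM x hx y hy z hz (hsum ▸ hb i)
  simp [hxy, hxz, hyz] at this

end IsSidon

section

variable {ι : Type*} [DecidableEq ι]

theorem disjoint_of_card_symmDiff_ne_two {S T : Finset ι} (hS : #S = 0 ∨ #S = 2)
    (hT : #T = 0 ∨ #T = 2) (hne : S ≠ T) (hST : #(symmDiff S T) ≠ 2) :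
    #S = 2 ∧ #T = 2 ∧ Disjoint S T := by
  have hpos : #(symmDiff S T) ≠ 0 := by simpa using hne
  have hcard := card_symmDiff_add_two_mul_card_inter S T
  have hleft : #(S ∩ T) ≤ #S := card_le_card inter_subset_left
  have hright : #(S ∩ T) ≤ #T := card_le_card inter_subset_right
  rw [disjoint_iff_inter_eq_empty, ← card_eq_zero]
  omega

theorem subset_singleton_empty_or_subset_disjoint_pairs [Fintype ι] {𝒯 : Finset (Finset ι)}
    (hι : 4 ≤ Fintype.card ι) (hcard : ∀ T ∈ 𝒯, #T = 0 ∨ #T = 2)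
    (hpair : ∀ S ∈ 𝒯, ∀ T ∈ 𝒯, #(symmDiff S T) ≠ 2)
    (htriple : ∀ R ∈ 𝒯, ∀ S ∈ 𝒯, ∀ T ∈ 𝒯, R ≠ S → R ≠ T → S ≠ T →
      #(symmDiff (symmDiff R S) T) ≠ 6) :
    𝒯 ⊆ {∅} ∨ ∃ A B : Finset ι, #A = 2 ∧ #B = 2 ∧ Disjoint A B ∧ 𝒯 ⊆ {A, B} := by
  have hdisj {S T} (hS : S ∈ 𝒯) (hT : T ∈ 𝒯) (hne : S ≠ T) :=
    disjoint_of_card_symmDiff_ne_two (hcard S hS) (hcard T hT) hne (hpair S hS T hT)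
  refine or_iff_not_imp_left.2 fun hempty => ?_
  obtain ⟨A, hA, hAne⟩ := not_subset.1 hempty
  by_cases hexB : ∃ B ∈ 𝒯, A ≠ B
  · obtain ⟨B, hB, hAB⟩ := hexB
    obtain ⟨hA2, hB2, hABd⟩ := hdisj hA hB hAB
    refine ⟨A, B, hA2, hB2, hABd, fun C hC => ?_⟩
    by_contra hCAB
    simp only [mem_insert, mem_singleton, not_or] at hCAB
    obtain ⟨-, hC2, hACd⟩ := hdisj hA hC (Ne.symm hCAB.1)
    obtain ⟨-, -, hBCd⟩ := hdisj hB hC (Ne.symm hCAB.2)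
    refine htriple A hA B hB C hC hAB (Ne.symm hCAB.1) (Ne.symm hCAB.2) ?_
    have hABCd : Disjoint (A ∪ B) C := disjoint_union_left.2 ⟨hACd, hBCd⟩
    rw [hABd.symmDiff_eq_sup, sup_eq_union, hABCd.symmDiff_eq_sup, sup_eq_union,
      card_union_of_disjoint hABCd, card_union_of_disjoint hABd, hA2, hB2, hC2]
  · have hA2 : #A = 2 := (hcard A hA).resolve_left (by simpa using hAne)
    obtain ⟨B, hBA, hB2⟩ := exists_subset_card_eq (s := Aᶜ) (n := 2) (by rw [card_compl]; omega)
    refine ⟨A, B, hA2, hB2, disjoint_right.2 fun i hi => mem_compl.1 (hBA hi), fun T hT => ?_⟩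
    push Not at hexB
    simp [hexB T hT]

theorem exists_perm_image_eq [Finite ι] {A B C D : Finset ι} (hAB : Disjoint A B)
    (hCD : Disjoint C D) (hAC : #A = #C) (hBD : #B = #D) :
    ∃ σ : Equiv.Perm ι, A.image σ = C ∧ B.image σ = D := by
  let e : ↥(A ∪ B) ≃ ↥(C ∪ D) := (Equiv.Finset.union A B hAB).symm.trans <|
    (Equiv.sumCongr (equivOfCardEq hAC) (equivOfCardEq hBD)).trans (Equiv.Finset.union C D hCD)
  have hleft : A.image e.extendSubtype ⊆ C := image_subset_iff.2 fun i hi => by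
    rw [e.extendSubtype_apply_of_mem i (mem_union_left B hi)]
    simp [e, Equiv.Finset.union_symm_left hAB hi]
  have hright : B.image e.extendSubtype ⊆ D := image_subset_iff.2 fun i hi => by
    rw [e.extendSubtype_apply_of_mem i (mem_union_right A hi)]
    simp [e, Equiv.Finset.union_symm_right hAB hi]
  exact ⟨e.extendSubtype,
    eq_of_subset_of_card_le hleft (by rw [card_image_of_injective _ (Equiv.injective _), hAC]),
    eq_of_subset_of_card_le hright (by rw [card_image_of_injective _ (Equiv.injective _), hBD])⟩

end

namespace IsSidon

variable {t : ℕ} {M : Finset (Fin t → ZMod 2)}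
  {b : AffineBasis (Fin 7) (ZMod 2) (Fin t → ZMod 2)}

theorem card_zeroCoords_eq_zero_or_two (hM : IsSidon M) (hb : ∀ i, b i ∈ M) {x : Fin t → ZMod 2}
    (hx : x ∈ M) (hxb : x ∉ Set.range b) : #(zeroCoords b x) = 0 ∨ #(zeroCoords b x) = 2 := by
  have hone := card_compl_zeroCoords_ne_one b hxb
  have hthree := hM.card_compl_zeroCoords_ne_three hb hx
  have hcard := card_add_card_compl (zeroCoords b x)
  obtain ⟨k, hodd⟩ := odd_card_compl_zeroCoords b x
  rw [Fintype.card_fin] at hcard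
  omega

theorem subset_frameExtension (hM : IsSidon M) (hb : ∀ i, b i ∈ M) :
    M ⊆ frameExtension b {∅} ∨
      ∃ σ : Equiv.Perm (Fin 7), M ⊆ frameExtension (b ∘ σ) {{3, 4}, {5, 6}} := by
  set 𝒯 := (M \ univ.image b).image (zeroCoords b) with h𝒯
  have hsub : M ⊆ frameExtension b 𝒯 := subset_frameExtension_image_zeroCoords b M
  have hoff {x} (hx : x ∈ M \ univ.image b) : x ∈ M ∧ x ∉ Set.range b := by simpa using hx
  have hcard : ∀ T ∈ 𝒯, #T = 0 ∨ #T = 2 := by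
    simp only [h𝒯, forall_mem_image]
    exact fun x hx => hM.card_zeroCoords_eq_zero_or_two hb (hoff hx).1 (hoff hx).2
  have hpair : ∀ S ∈ 𝒯, ∀ T ∈ 𝒯, #(symmDiff S T) ≠ 2 := by
    simp only [h𝒯, forall_mem_image]
    exact fun x hx y hy => hM.card_symmDiff_zeroCoords_ne_two hb (hoff hx).1 (hoff hy).1
      (hoff hx).2 (hoff hy).2
  have htriple : ∀ R ∈ 𝒯, ∀ S ∈ 𝒯, ∀ T ∈ 𝒯, R ≠ S → R ≠ T → S ≠ T →
      #(symmDiff (symmDiff R S) T) ≠ 6 := by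
    simp only [h𝒯, forall_mem_image, (zeroCoords_injective b).ne_iff]
    intro x hx y hy z hz hxy hxz hyz h
    refine hM.card_compl_symmDiff_zeroCoords_ne_one hb (hoff hx).1 (hoff hy).1 (hoff hz).1
      hxy hxz hyz ?_
    rw [card_compl, h, Fintype.card_fin]
  rcases subset_singleton_empty_or_subset_disjoint_pairs (by simp) hcard hpair htriple
    with h | ⟨A, B, hA, hB, hAB, h⟩
  · exact .inl (hsub.trans (frameExtension_mono b h))
  · obtain ⟨σ, rfl, rfl⟩ := exists_perm_image_eq (A := {3, 4}) (B := {5, 6}) (by decide) hAB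
      hA.symm hB.symm
    refine .inr ⟨σ, hsub.trans ?_⟩
    rw [frameExtension_comp_equiv, image_insert, image_singleton]
    exact frameExtension_mono b h

theorem exists_affineEquiv_subset_image {M : Finset (Fin 6 → ZMod 2)} (hM : IsSidon M)
    (hspan : affineSpan (ZMod 2) (M : Set (Fin 6 → ZMod 2)) = ⊤) :
    ∃ f : (Fin 6 → ZMod 2) ≃ᵃ[ZMod 2] (Fin 6 → ZMod 2), M ⊆ M6a.image f ∨ M ⊆ M6b.image f := by
  obtain ⟨b, hb⟩ := exists_affineBasis_forall_mem hspan (Module.finrank_fin_fun (ZMod 2))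
  rw [M6a_eq_frameExtension, M6b_eq_frameExtension]
  rcases hM.subset_frameExtension hb with h | ⟨σ, h⟩
  · obtain ⟨f, hf⟩ := exists_affineEquiv_image_frameExtension b (𝒯 := {∅}) (by decide +kernel)
    exact ⟨f, .inr (hf ▸ h)⟩
  · obtain ⟨f, hf⟩ := exists_affineEquiv_image_frameExtension (b.reindex σ.symm)
      (𝒯 := {{3, 4}, {5, 6}}) (by decide +kernel)
    rw [AffineBasis.coe_reindex, Equiv.symm_symm] at hf
    exact ⟨f, .inl (hf ▸ h)⟩

end IsSidon

end

theorem maximal_sidon_dim6 :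
    M6a.card = 9 ∧ M6b.card = 8 ∧
    ∀ M : Finset (Fin 6 → ZMod 2), IsMaximalSidon M →
      ∃ (L : (Fin 6 → ZMod 2) ≃ₗ[ZMod 2] (Fin 6 → ZMod 2)) (a : Fin 6 → ZMod 2),
        Finset.image (fun x => L x + a) M6a = M ∨
        Finset.image (fun x => L x + a) M6b = M := by
  refine ⟨by decide +kernel, by decide +kernel, fun M hM => ?_⟩
  obtain ⟨f, hf⟩ := hM.1.exists_affineEquiv_subset_image hM.affineSpan_eq_top
  have hdecomp : (fun x => f.linear x + f 0) = f := f.toAffineMap.decomp.symm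
  refine ⟨f.linear, f 0, ?_⟩
  rw [hdecomp]
  exact hf.imp (hM.2 _ (isSidon_M6a.image f.toAffineMap f.injective))
    (hM.2 _ (isSidon_M6b.image f.toAffineMap f.injective))
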